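/- arXiv:1612.05393 — 3 statements merged into one kernel-verified Lean document; each statement's English description precedes it below -/
import Mathlib

section
/- Faà di Bruno's formula: Let f, g : ℝ → ℝ be n-times continuously differentiable functions, and let x ∈ ℝ. Then the n-th derivative of the composition f ∘ g at x equals the sum, over all tuples (m₁, …, mₙ) of non-negative integers satisfying m₁ + 2·m₂ + ⋯ + n·mₙ = n, of the terms n! / (m₁! · m₂! ⋯ mₙ!) · f^{(p)}(g(x)) · ∏_{j=1}^{n} ( g^{(j)}(x) / j! )^{m_j}, where p = m₁ + m₂ + ⋯ + mₙ. -/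
open Finset

/-!
Let `A_y(t) = ∑_{j ≥ 1} g⁽ʲ⁾(y) tʲ / j!` be the Taylor series at `y` of `t ↦ g (y + t) - g y`.
Coefficientwise, `∂_y A_y = ∂_t A_y - g'(y)`, hence
`∂_y (A_y ^ p / p!) = ∂_t (A_y ^ p / p!) - g'(y) A_y ^ (p - 1) / (p - 1)!`.
For `B_{k,p} = k! [tᵏ] A_y ^ p / p!` (the partial Bell polynomials in the derivatives of `g`) this
reads `B_{k+1,p} = B_{k,p}' + g' B_{k,p-1}`, which is exactly what is needed to get
`(f ∘ g)⁽ᵏ⁾ = ∑_p B_{k,p} · (f⁽ᵖ⁾ ∘ g)` by induction on `k`.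
The multinomial theorem evaluates `[tⁿ] A_y ^ p`.
-/

section PowerSeriesPow

open PowerSeries

variable {R : Type*} [CommSemiring R]

lemma coeff_pow_eq_zero_of_lt {φ : R⟦X⟧} (hφ : constantCoeff φ = 0) {k p : ℕ} (hkp : k < p) :
    coeff k (φ ^ p) = 0 :=
  coeff_of_lt_order k <| (Nat.cast_lt.2 hkp).trans_le (le_order_pow_of_constantCoeff_eq_zero p hφ)

lemma trunc_succ_eq_sum_monomial {φ : R⟦X⟧} (hφ : constantCoeff φ = 0) (n : ℕ) :
    trunc (n + 1) φ = ∑ j : Fin n, Polynomial.monomial (j.1 + 1) (coeff (j.1 + 1) φ) := by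
  rw [trunc_apply, Nat.Ico_zero_eq_range, sum_range_succ', coeff_zero_eq_constantCoeff_apply, hφ,
    map_zero, add_zero,
    ← Fin.sum_univ_eq_sum_range fun j ↦ Polynomial.monomial (j + 1) (coeff (j + 1) φ)]

lemma prod_monomial_pow {ι : Type*} (s : Finset ι) (d m : ι → ℕ) (a : ι → R) :
    ∏ j ∈ s, Polynomial.monomial (d j) (a j) ^ m j =
      Polynomial.monomial (∑ j ∈ s, d j * m j) (∏ j ∈ s, a j ^ m j) := by
  simp only [← Polynomial.C_mul_X_pow_eq_monomial, mul_pow, ← pow_mul, prod_mul_distrib,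
    prod_pow_eq_pow_sum, map_prod, map_pow]

theorem coeff_pow_eq_sum_multinomial {φ : R⟦X⟧} (hφ : constantCoeff φ = 0) (n p : ℕ) :
    coeff n (φ ^ p) =
      ∑ m ∈ (piAntidiag univ p).filter (fun m : Fin n → ℕ ↦ ∑ j, (j.1 + 1) * m j = n),
        (Nat.multinomial univ m : R) * ∏ j, coeff (j.1 + 1) φ ^ m j := by
  have coeff_eq_trunc : coeff n (φ ^ p) = (trunc (n + 1) φ ^ p).coeff n := by
    rw [← coeff_coe_trunc_of_lt n.lt_succ_self, ← trunc_trunc_pow,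
      coeff_coe_trunc_of_lt n.lt_succ_self, ← Polynomial.coe_pow, Polynomial.coeff_coe]
  rw [coeff_eq_trunc, trunc_succ_eq_sum_monomial hφ, sum_pow_eq_sum_piAntidiag,
    Polynomial.finsetSum_coeff, sum_filter]
  refine sum_congr rfl fun m _ ↦ ?_
  rw [Polynomial.coeff_natCast_mul, prod_monomial_pow, Polynomial.coeff_monomial, mul_ite, mul_zero]

end PowerSeriesPow

section PartialBell

open PowerSeries

variable {K : Type*} [Field K]

/-- The exponential generating function `∑_{j ≥ 1} cⱼ Xʲ / j!` of the sequence `c`. Its constant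
term is `0` whatever `c 0` is: it models the Taylor series of an increment `g (y + t) - g y`. -/
noncomputable def reducedEgf (c : ℕ → K) : K⟦X⟧ :=
  .mk fun j ↦ if j = 0 then 0 else c j / j.factorial

lemma constantCoeff_reducedEgf (c : ℕ → K) : constantCoeff (reducedEgf c) = 0 := by
  rw [← coeff_zero_eq_constantCoeff_apply, reducedEgf, coeff_mk, if_pos rfl]

lemma coeff_succ_reducedEgf (c : ℕ → K) (j : ℕ) :
    coeff (j + 1) (reducedEgf c) = c (j + 1) / (j + 1).factorial := by
  rw [reducedEgf, coeff_mk, if_neg j.succ_ne_zero]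

lemma coeff_derivative_reducedEgf [CharZero K] (c : ℕ → K) (j : ℕ) :
    coeff j (d⁄dX K (reducedEgf c)) = c (j + 1) / j.factorial := by
  have : (j + 1 : K) ≠ 0 := by exact_mod_cast j.succ_ne_zero
  rw [coeff_derivative, coeff_succ_reducedEgf, Nat.factorial_succ, Nat.cast_mul, Nat.cast_succ,
    div_mul_eq_mul_div, mul_comm (c _), mul_div_mul_left _ _ this]

/-- The partial exponential Bell polynomial `B_{k,p}(c₁, c₂, …)`, encoded through its generating
function as `k! / p!` times the `k`-th coefficient of `(∑_{j ≥ 1} cⱼ Xʲ / j!) ^ p`. -/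
noncomputable def partialBell (c : ℕ → K) (k p : ℕ) : K :=
  k.factorial / p.factorial * coeff k (reducedEgf c ^ p)

lemma partialBell_zero_right (c : ℕ → K) (k : ℕ) :
    partialBell c k 0 = if k = 0 then 1 else 0 := by
  rw [partialBell, pow_zero, coeff_one]
  split_ifs with hk <;> simp [hk]

lemma partialBell_eq_zero_of_lt (c : ℕ → K) {k p : ℕ} (hkp : k < p) : partialBell c k p = 0 := by
  rw [partialBell, coeff_pow_eq_zero_of_lt (constantCoeff_reducedEgf c) hkp, mul_zero]

theorem partialBell_eq_sum [CharZero K] (c : ℕ → K) (n p : ℕ) :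
    partialBell c n p =
      ∑ m ∈ (piAntidiag univ p).filter (fun m : Fin n → ℕ ↦ ∑ j, (j.1 + 1) * m j = n),
        (n.factorial : K) / (∏ j, ((m j).factorial : K)) *
          ∏ j, (c (j.1 + 1) / ((j.1 + 1).factorial : K)) ^ m j := by
  rw [partialBell, coeff_pow_eq_sum_multinomial (constantCoeff_reducedEgf c), mul_sum]
  refine sum_congr rfl fun m hm ↦ ?_
  have sum_eq : ∑ j, m j = p := (mem_piAntidiag.1 (mem_filter.1 hm).1).1
  have multinomial_eq : (∏ j, ((m j).factorial : K)) * Nat.multinomial univ m = p.factorial := by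
    exact_mod_cast sum_eq ▸ Nat.multinomial_spec univ m
  have prod_ne : ∏ j, ((m j).factorial : K) ≠ 0 :=
    prod_ne_zero_iff.2 fun j _ ↦ Nat.cast_ne_zero.2 (m j).factorial_ne_zero
  have factorial_ne : (p.factorial : K) ≠ 0 := Nat.cast_ne_zero.2 p.factorial_ne_zero
  simp only [coeff_succ_reducedEgf, ← mul_assoc]
  congr 1
  rw [div_mul_eq_mul_div, div_eq_div_iff factorial_ne prod_ne, ← multinomial_eq]
  ring

lemma filter_sum_eq_filter_piAntidiag (n p : ℕ) :
    ((Fintype.piFinset fun _ : Fin n ↦ range (n + 1)).filter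
        (fun m ↦ ∑ j, (j.1 + 1) * m j = n)).filter (fun m ↦ ∑ j, m j = p) =
      (piAntidiag univ p).filter (fun m : Fin n → ℕ ↦ ∑ j, (j.1 + 1) * m j = n) := by
  ext m
  have mem_box (weight_eq : ∑ j, (j.1 + 1) * m j = n) (j : Fin n) : m j < n + 1 :=
    calc m j ≤ (j.1 + 1) * m j := Nat.le_mul_of_pos_left _ j.1.succ_pos
      _ ≤ ∑ i : Fin n, (i.1 + 1) * m i :=
        single_le_sum (f := fun i : Fin n ↦ (i.1 + 1) * m i) (fun _ _ ↦ Nat.zero_le _) (mem_univ j)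
      _ < n + 1 := by rw [weight_eq]; exact n.lt_succ_self
  simp only [mem_filter, Fintype.mem_piFinset, mem_range, mem_piAntidiag, mem_univ, implies_true,
    and_true]
  exact ⟨fun h ↦ ⟨h.2, h.1.2⟩, fun h ↦ ⟨⟨mem_box h.2, h.2⟩, h.1⟩⟩

theorem sum_partialBell_smul [CharZero K] {M : Type*} [AddCommMonoid M] [Module K M] (c : ℕ → K)
    (F : ℕ → M) (n : ℕ) :
    ∑ p ∈ range (n + 1), partialBell c n p • F p =
      ∑ m ∈ (Fintype.piFinset fun _ : Fin n ↦ range (n + 1)).filter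
          (fun m ↦ ∑ j, (j.1 + 1) * m j = n),
        ((n.factorial : K) / (∏ j, ((m j).factorial : K)) *
          ∏ j, (c (j.1 + 1) / ((j.1 + 1).factorial : K)) ^ m j) • F (∑ j, m j) := by
  have sum_mem_range (m : Fin n → ℕ) (hm : m ∈ (Fintype.piFinset fun _ ↦ range (n + 1)).filter
      (fun m ↦ ∑ j, (j.1 + 1) * m j = n)) : ∑ j, m j ∈ range (n + 1) := by
    rw [mem_range, Nat.lt_succ_iff]
    calc ∑ j, m j ≤ ∑ j, (j.1 + 1) * m j :=
          sum_le_sum fun j _ ↦ Nat.le_mul_of_pos_left _ j.1.succ_pos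
      _ = n := (mem_filter.1 hm).2
  rw [← sum_fiberwise_of_maps_to sum_mem_range]
  refine sum_congr rfl fun p _ ↦ ?_
  rw [partialBell_eq_sum, sum_smul, filter_sum_eq_filter_piAntidiag]
  refine sum_congr rfl fun m hm ↦ ?_
  rw [(mem_piAntidiag.1 (mem_filter.1 hm).1).1]

end PartialBell

section Derivatives

open PowerSeries

variable {𝕜 : Type*} [NontriviallyNormedField 𝕜] {x : 𝕜} {k n : ℕ}
  {F : Type*} [NormedAddCommGroup F] [NormedSpace 𝕜 F]

lemma hasDerivAt_iteratedDeriv {f : 𝕜 → F} (hf : ContDiffAt 𝕜 n f x) (hk : k < n) :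
    HasDerivAt (iteratedDeriv k f) (iteratedDeriv (k + 1) f x) x := by
  have differentiable : DifferentiableAt 𝕜 (iteratedDeriv k f) x := by
    simpa only [iteratedDeriv_eq_equiv_comp, LinearIsometryEquiv.comp_differentiableAt_iff] using
      hf.differentiableAt_iteratedFDeriv (Nat.cast_lt.2 hk)
  rw [iteratedDeriv_succ]
  exact differentiable.hasDerivAt

lemma hasDerivAt_coeff_mul {φ ψ : 𝕜 → 𝕜⟦X⟧} {φ' ψ' : 𝕜⟦X⟧}
    (hφ : ∀ j ≤ k, HasDerivAt (fun y ↦ coeff j (φ y)) (coeff j φ') x)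
    (hψ : ∀ j ≤ k, HasDerivAt (fun y ↦ coeff j (ψ y)) (coeff j ψ') x) :
    HasDerivAt (fun y ↦ coeff k (φ y * ψ y)) (coeff k (φ' * ψ x + φ x * ψ')) x := by
  simp only [map_add, coeff_mul, ← sum_add_distrib]
  refine HasDerivAt.fun_sum fun ij hij ↦ ?_
  have add_eq := mem_antidiagonal.1 hij
  exact (hφ ij.1 (by omega)).mul (hψ ij.2 (by omega))

lemma hasDerivAt_coeff_pow {φ : 𝕜 → 𝕜⟦X⟧} {φ' : 𝕜⟦X⟧} (p : ℕ)
    (hφ : ∀ j ≤ k, HasDerivAt (fun y ↦ coeff j (φ y)) (coeff j φ') x) :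
    HasDerivAt (fun y ↦ coeff k (φ y ^ p)) (coeff k (p * φ x ^ (p - 1) * φ')) x := by
  induction p generalizing k with
  | zero => simpa using hasDerivAt_const x (coeff k (1 : 𝕜⟦X⟧))
  | succ p ih =>
    have product_rule := hasDerivAt_coeff_mul (fun j hj ↦ ih fun i hi ↦ hφ i (hi.trans hj)) hφ
    simp only [← pow_succ] at product_rule
    refine product_rule.congr_deriv (congrArg _ ?_)
    cases p with
    | zero => simp
    | succ p => push_cast [Nat.add_sub_cancel]; ring

variable [CharZero 𝕜] {c : 𝕜 → ℕ → 𝕜}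

lemma hasDerivAt_coeff_reducedEgf (hc : 1 ≤ k → HasDerivAt (c · k) (c x (k + 1)) x) :
    HasDerivAt (fun y ↦ coeff k (reducedEgf (c y)))
      (coeff k (d⁄dX 𝕜 (reducedEgf (c x)) - C (c x 1))) x := by
  rw [map_sub, coeff_derivative_reducedEgf, coeff_C]
  cases k with
  | zero => simpa [constantCoeff_reducedEgf] using hasDerivAt_const x (0 : 𝕜)
  | succ k =>
    simp only [coeff_succ_reducedEgf, if_neg k.succ_ne_zero, sub_zero]
    exact (hc k.succ_pos).div_const _

theorem hasDerivAt_partialBell_succ (p : ℕ)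
    (hc : ∀ j, 1 ≤ j → j ≤ k → HasDerivAt (c · j) (c x (j + 1)) x) :
    HasDerivAt (fun y ↦ partialBell (c y) k (p + 1))
      (partialBell (c x) (k + 1) (p + 1) - c x 1 * partialBell (c x) k p) x := by
  have coeff_deriv := hasDerivAt_coeff_pow (p + 1) fun j hj ↦
    hasDerivAt_coeff_reducedEgf fun one_le ↦ hc j one_le hj
  have transport (A : 𝕜⟦X⟧) : ((p + 1 : ℕ) : 𝕜⟦X⟧) * A ^ (p + 1 - 1) * (d⁄dX 𝕜 A - C (c x 1)) =
      d⁄dX 𝕜 (A ^ (p + 1)) - C ((p + 1) * c x 1) * A ^ p := by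
    simp only [derivative_pow, Nat.add_sub_cancel, map_mul, map_add, map_natCast, map_one,
      Nat.cast_succ]
    ring
  have succ_ne : (p + 1 : 𝕜) ≠ 0 := by exact_mod_cast p.succ_ne_zero
  have factorial_ne : (p.factorial : 𝕜) ≠ 0 := by exact_mod_cast p.factorial_ne_zero
  refine (coeff_deriv.const_mul _).congr_deriv ?_
  rw [transport, map_sub, coeff_derivative, coeff_C_mul, partialBell, partialBell]
  simp only [Nat.factorial_succ, Nat.cast_mul, Nat.cast_succ]
  field_simp

theorem hasDerivAt_sum_partialBell_smul {G : 𝕜 → ℕ → F}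
    (hc : ∀ j, 1 ≤ j → j ≤ n → HasDerivAt (c · j) (c x (j + 1)) x)
    (hG : ∀ p ≤ n, HasDerivAt (G · p) (c x 1 • G x (p + 1)) x) :
    HasDerivAt (fun y ↦ ∑ p ∈ range (n + 1), partialBell (c y) n p • G y p)
      (∑ p ∈ range (n + 2), partialBell (c x) (n + 1) p • G x p) x := by
  set B' : ℕ → 𝕜 := fun p ↦ deriv (fun y ↦ partialBell (c y) n p) x with hB'
  have hasDerivAt_B (p : ℕ) : HasDerivAt (fun y ↦ partialBell (c y) n p) (B' p) x := by
    refine DifferentiableAt.hasDerivAt ?_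
    cases p with
    | zero => simp only [partialBell_zero_right, differentiableAt_const]
    | succ p => exact (hasDerivAt_partialBell_succ p hc).differentiableAt
  have B'_zero : B' 0 = 0 := by simp only [hB', partialBell_zero_right, deriv_const]
  have B'_last : B' (n + 1) = 0 := by
    simp only [hB', partialBell_eq_zero_of_lt _ n.lt_succ_self, deriv_const]
  have partialBell_rec (p : ℕ) :
      partialBell (c x) (n + 1) (p + 1) = partialBell (c x) n p * c x 1 + B' (p + 1) := by
    rw [(hasDerivAt_B (p + 1)).unique (hasDerivAt_partialBell_succ p hc)]
    ring
  have sum_B'_shift : ∑ p ∈ range (n + 1), B' (p + 1) • G x (p + 1) =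
      ∑ p ∈ range (n + 1), B' p • G x p := by
    have two_splittings := (sum_range_succ' (fun p ↦ B' p • G x p) (n + 1)).symm.trans
      (sum_range_succ (fun p ↦ B' p • G x p) (n + 1))
    simpa only [B'_zero, B'_last, zero_smul, add_zero] using two_splittings
  refine (HasDerivAt.fun_sum fun p hp ↦
    (hasDerivAt_B p).fun_smul (hG p (Nat.lt_succ_iff.1 (mem_range.1 hp)))).congr_deriv ?_
  rw [sum_range_succ' _ (n + 1), partialBell_zero_right, if_neg n.succ_ne_zero, zero_smul, add_zero]
  simp only [partialBell_rec, add_smul, mul_smul, sum_add_distrib, sum_B'_shift]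

theorem iteratedDeriv_comp_eq_sum_partialBell {f : 𝕜 → F} {g : 𝕜 → 𝕜}
    (hf : ContDiffAt 𝕜 n f (g x)) (hg : ContDiffAt 𝕜 n g x) :
    iteratedDeriv n (f ∘ g) x =
      ∑ p ∈ range (n + 1),
        partialBell (fun j ↦ iteratedDeriv j g x) n p • iteratedDeriv p f (g x) := by
  induction n generalizing x with
  | zero => simp [partialBell_zero_right]
  | succ n ih =>
    have n_le : (n : WithTop ℕ∞) ≤ (n + 1 : ℕ) := Nat.cast_le.2 n.le_succ
    have formula_near : iteratedDeriv n (f ∘ g) =ᶠ[nhds x] fun y ↦ ∑ p ∈ range (n + 1),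
        partialBell (fun j ↦ iteratedDeriv j g y) n p • iteratedDeriv p f (g y) := by
      have ne_infty : ((n + 1 : ℕ) : WithTop ℕ∞) ≠ (⊤ : ℕ∞) := by
        exact_mod_cast ENat.natCast_ne_top (n + 1)
      filter_upwards [hg.continuousAt.eventually (hf.eventually ne_infty),
        hg.eventually ne_infty] with y hfy hgy
      exact ih (hfy.of_le n_le) (hgy.of_le n_le)
    have hasDerivAt_g : HasDerivAt g (iteratedDeriv 1 g x) x := by
      simpa only [iteratedDeriv_zero] using hasDerivAt_iteratedDeriv hg n.succ_pos
    rw [iteratedDeriv_succ, formula_near.deriv_eq]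
    exact (hasDerivAt_sum_partialBell_smul (c := fun y j ↦ iteratedDeriv j g y)
      (G := fun y p ↦ iteratedDeriv p f (g y))
      (fun j _ hj ↦ hasDerivAt_iteratedDeriv hg (Nat.lt_succ_iff.2 hj))
      (fun p hp ↦ (hasDerivAt_iteratedDeriv hf (Nat.lt_succ_iff.2 hp)).scomp x hasDerivAt_g)).deriv

end Derivatives

theorem faa_di_bruno_general {𝕜 : Type*} [NontriviallyNormedField 𝕜] [CharZero 𝕜]
    {F : Type*} [NormedAddCommGroup F] [NormedSpace 𝕜 F] (n : ℕ) (f : 𝕜 → F) (g : 𝕜 → 𝕜) (x : 𝕜)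
    (hf : ContDiffAt 𝕜 n f (g x)) (hg : ContDiffAt 𝕜 n g x) :
    iteratedDeriv n (f ∘ g) x =
      ∑ m ∈ (Fintype.piFinset fun _ : Fin n ↦ range (n + 1)).filter
          (fun m ↦ ∑ j, (j.1 + 1) * m j = n),
        ((n.factorial : 𝕜) / (∏ j, ((m j).factorial : 𝕜)) *
          ∏ j, (iteratedDeriv (j.1 + 1) g x / ((j.1 + 1).factorial : 𝕜)) ^ m j) •
            iteratedDeriv (∑ j, m j) f (g x) := by
  rw [iteratedDeriv_comp_eq_sum_partialBell hf hg, sum_partialBell_smul]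

/-- **Faà di Bruno's formula.** For `n`-times continuously differentiable
`f g : ℝ → ℝ`, the `n`-th derivative of `f ∘ g` at `x` is the sum over all
tuples `(m₁, …, mₙ)` of nonnegative integers with `∑ j·m_j = n` of
`n! / (m₁!⋯mₙ!) · f^{(p)}(g x) · ∏ (g^{(j)}(x)/j!)^{m_j}` where `p = ∑ m_j`. -/
theorem faa_di_bruno (n : ℕ) (f g : ℝ → ℝ)
    (hf : ContDiff ℝ n f) (hg : ContDiff ℝ n g) (x : ℝ) :
    iteratedDeriv n (f ∘ g) x =
      ∑ m ∈ (Fintype.piFinset fun _ : Fin n => Finset.range (n + 1)).filter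
          (fun m : Fin n → ℕ => ∑ j : Fin n, (j.1 + 1) * m j = n),
        (n.factorial : ℝ) / (∏ j : Fin n, ((m j).factorial : ℝ)) *
          iteratedDeriv (∑ j : Fin n, m j) f (g x) *
          ∏ j : Fin n,
            (iteratedDeriv (j.1 + 1) g x / ((j.1 + 1).factorial : ℝ)) ^ m j := by
  simpa only [smul_eq_mul, mul_right_comm] using
    faa_di_bruno_general n f g x hf.contDiffAt hg.contDiffAt
end

section
/- Faà di Bruno's formula for powers (Lagrange series case): Let g : ℝ → ℝ be n-times continuously differentiable, let m ∈ ℕ, and let y ∈ ℝ. Then (1/n!) times the n-th derivative at y of the function x ↦ (g(x))^m equals the sum, over all tuples (m₁, …, mₙ) of non-negative integers satisfying m₁ + 2·m₂ + ⋯ + n·mₙ = n, of m·(m−1)⋯(m−p+1) / (m₁! · m₂! ⋯ mₙ!) · (g(y))^{m−p} · ∏_{j=1}^{n} ( g^{(j)}(y) / j! )^{m_j}, where p = m₁ + ⋯ + mₙ and m·(m−1)⋯(m−p+1) denotes the descending factorial (which is 0 when p > m, in which case the exponent m−p is interpreted via natural subtraction and the term vanishes). -/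
open Finset

/-!
By the Leibniz rule, passing from a function to its formal Taylor series at `y` is multiplicative,
coefficient by coefficient up to the order of differentiability. Hence the `n`-th Taylor coefficient
of `g ^ m` is the `n`-th coefficient of the `m`-th power of the Taylor series of `g`. Only the part
`a + ∑ j, bⱼ X ^ (j + 1)` of degree at most `n` contributes to it, and expanding
`(a + ∑ j, bⱼ X ^ (j + 1)) ^ m` by the binomial and then the multinomial theorem gives the formula.
-/

section WeightedTuples

variable {ι : Type*} [Fintype ι] [DecidableEq ι]

/-- The tuples `c : ι → ℕ` of total weight `∑ j, w j * c j = n`, where `w j` is the weight of the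
index `j`. The bound `c j ≤ n` keeps the set finite; it excludes nothing when all weights are
nonzero. -/
def tuplesOfWeight (w : ι → ℕ) (n : ℕ) : Finset (ι → ℕ) :=
  {c ∈ Fintype.piFinset fun _ : ι => range (n + 1) | ∑ j, w j * c j = n}

variable {w : ι → ℕ}

lemma mem_tuplesOfWeight (hw : ∀ j, w j ≠ 0) {n : ℕ} {c : ι → ℕ} :
    c ∈ tuplesOfWeight w n ↔ ∑ j, w j * c j = n := by
  simp only [tuplesOfWeight, mem_filter, Fintype.mem_piFinset, mem_range, Nat.lt_succ_iff,
    and_iff_right_iff_imp]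
  rintro rfl j
  calc
    c j ≤ w j * c j := Nat.le_mul_of_pos_left _ (Nat.pos_of_ne_zero (hw j))
    _ ≤ ∑ i, w i * c i := single_le_sum_of_canonicallyOrdered (f := fun i => w i * c i) (mem_univ j)

lemma filter_piAntidiag_eq_filter_tuplesOfWeight (hw : ∀ j, w j ≠ 0) (n p : ℕ) :
    {c ∈ piAntidiag (univ : Finset ι) p | ∑ j, w j * c j = n} =
      {c ∈ tuplesOfWeight w n | ∑ j, c j = p} := by
  ext c
  simp [mem_tuplesOfWeight hw, and_comm]

end WeightedTuples

section Coefficients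

open Polynomial

variable {R ι : Type*} [CommSemiring R] [Fintype ι] [DecidableEq ι]

lemma coeff_sum_C_mul_X_pow_pow (b : ι → R) (w : ι → ℕ) (n p : ℕ) :
    ((∑ j, C (b j) * X ^ w j) ^ p).coeff n =
      ∑ c ∈ piAntidiag univ p with ∑ j, w j * c j = n,
        (Nat.multinomial univ c : R) * ∏ j, b j ^ c j := by
  have term_eq (c : ι → ℕ) :
      (Nat.multinomial univ c : R[X]) * ∏ j, (C (b j) * X ^ w j) ^ c j =
        C ((Nat.multinomial univ c : R) * ∏ j, b j ^ c j) * X ^ ∑ j, w j * c j := by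
    simp only [mul_pow, prod_mul_distrib, ← pow_mul, prod_pow_eq_pow_sum, map_mul, map_prod,
      map_pow, map_natCast, mul_assoc]
  simp only [sum_pow_eq_sum_piAntidiag, term_eq, finsetSum_coeff, coeff_C_mul_X_pow, sum_filter,
    eq_comm (a := n)]

lemma coeff_C_add_pow (a : R) (q : R[X]) (m n : ℕ) :
    ((C a + q) ^ m).coeff n =
      ∑ p ∈ range (m + 1), (m.choose p : R) * a ^ (m - p) * (q ^ p).coeff n := by
  rw [add_comm, add_pow, finsetSum_coeff]
  refine sum_congr rfl fun p _ => ?_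
  rw [← C_pow, ← C_eq_natCast, coeff_mul_C, coeff_mul_C]
  ring

lemma coeff_C_add_sum_C_mul_X_pow_pow (a : R) (b : ι → R) {w : ι → ℕ} (hw : ∀ j, w j ≠ 0)
    (m n : ℕ) :
    ((C a + ∑ j, C (b j) * X ^ w j) ^ m).coeff n =
      ∑ c ∈ tuplesOfWeight w n, ((m.choose (∑ j, c j) * Nat.multinomial univ c : ℕ) : R) *
        (a ^ (m - ∑ j, c j) * ∏ j, b j ^ c j) := by
  set T : (ι → ℕ) → R := fun c => ((m.choose (∑ j, c j) * Nat.multinomial univ c : ℕ) : R) *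
    (a ^ (m - ∑ j, c j) * ∏ j, b j ^ c j) with hT
  have coeff_eq_sum_fiber (p : ℕ) :
      (m.choose p : R) * a ^ (m - p) * ((∑ j, C (b j) * X ^ w j) ^ p).coeff n =
        ∑ c ∈ tuplesOfWeight w n with ∑ j, c j = p, T c := by
    rw [coeff_sum_C_mul_X_pow_pow, filter_piAntidiag_eq_filter_tuplesOfWeight hw, mul_sum]
    refine sum_congr rfl fun c hc => ?_
    simp only [hT, (mem_filter.mp hc).2, Nat.cast_mul]
    ring
  have sum_mem_range_of_ne_zero (c : ι → ℕ) (hc : T c ≠ 0) : ∑ j, c j ∈ range (m + 1) := by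
    contrapose! hc
    simp only [mem_range, Nat.lt_succ_iff, not_le] at hc
    simp [hT, Nat.choose_eq_zero_of_lt hc]
  calc
    _ = ∑ p ∈ range (m + 1), ∑ c ∈ tuplesOfWeight w n with ∑ j, c j = p, T c := by
      simp only [coeff_C_add_pow, coeff_eq_sum_fiber]
    _ = ∑ c ∈ tuplesOfWeight w n with ∑ j, c j ∈ range (m + 1), T c :=
      sum_fiberwise_eq_sum_filter _ _ _ _
    _ = ∑ c ∈ tuplesOfWeight w n, T c := sum_filter_of_ne fun c _ => sum_mem_range_of_ne_zero c

lemma trunc_succ_eq_C_add_sum (φ : PowerSeries R) (n : ℕ) :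
    φ.trunc (n + 1) =
      C (φ.coeff 0) + ∑ j : Fin n, C (φ.coeff (j + 1)) * X ^ (j.1 + 1) := by
  rw [PowerSeries.trunc_apply, Nat.Ico_zero_eq_range, sum_range_succ', add_comm,
    sum_range fun j => monomial (j + 1) (φ.coeff (j + 1))]
  simp only [C_mul_X_pow_eq_monomial, monomial_zero_left]

lemma coeff_pow_eq_coeff_trunc_pow (φ : PowerSeries R) (m n : ℕ) :
    (φ ^ m).coeff n = ((φ.trunc (n + 1)) ^ m).coeff n := by
  have coeff_trunc_eq := congrArg (Polynomial.coeff · n) (PowerSeries.trunc_trunc_pow φ (n + 1) m)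
  simpa [PowerSeries.coeff_trunc, ← Polynomial.coe_pow] using coeff_trunc_eq.symm

lemma coeff_pow_eq_sum_tuplesOfWeight (φ : PowerSeries R) (m n : ℕ) :
    (φ ^ m).coeff n = ∑ c ∈ tuplesOfWeight (fun j : Fin n => j.1 + 1) n,
      ((m.choose (∑ j, c j) * Nat.multinomial univ c : ℕ) : R) *
        (φ.coeff 0 ^ (m - ∑ j, c j) * ∏ j : Fin n, φ.coeff (j + 1) ^ c j) := by
  rw [coeff_pow_eq_coeff_trunc_pow, trunc_succ_eq_C_add_sum,
    coeff_C_add_sum_C_mul_X_pow_pow _ _ fun j => j.1.succ_ne_zero]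

end Coefficients

lemma cast_choose_mul_multinomial {ι K : Type*} [Semifield K] [CharZero K] (s : Finset ι)
    (c : ι → ℕ) (m : ℕ) :
    ((m.choose (∑ j ∈ s, c j) * Nat.multinomial s c : ℕ) : K) =
      (m.descFactorial (∑ j ∈ s, c j) : K) / ∏ j ∈ s, ((c j).factorial : K) := by
  have prod_ne_zero : ∏ j ∈ s, ((c j).factorial : K) ≠ 0 :=
    prod_ne_zero_iff.mpr fun j _ => Nat.cast_ne_zero.mpr (c j).factorial_ne_zero
  rw [eq_div_iff prod_ne_zero, Nat.descFactorial_eq_factorial_mul_choose, ← Nat.multinomial_spec]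
  push_cast
  ring

section TaylorSeries

variable {𝕜 : Type*} [NontriviallyNormedField 𝕜]

/-- The formal Taylor series of `f` at `x`, with coefficients `f⁽ᵏ⁾(x) / k!`; the division by `k!`
is a scalar multiplication, so that `f` may take values in any normed algebra. -/
noncomputable def taylorSeries {𝔸 : Type*} [NormedRing 𝔸] [NormedAlgebra 𝕜 𝔸] (f : 𝕜 → 𝔸)
    (x : 𝕜) : PowerSeries 𝔸 :=
  .mk fun k => (k.factorial : 𝕜)⁻¹ • iteratedDeriv k f x

lemma taylorSeries_one {𝔸 : Type*} [NormedRing 𝔸] [NormedAlgebra 𝕜 𝔸] (x : 𝕜) :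
    taylorSeries (1 : 𝕜 → 𝔸) x = 1 := by
  ext k
  rcases k with _ | k <;>
    simp [taylorSeries, PowerSeries.coeff_one, Pi.one_def, iteratedDeriv_const]

variable [CharZero 𝕜] {k : ℕ} {x : 𝕜}

lemma coeff_taylorSeries_mul {𝔸 : Type*} [NormedRing 𝔸] [NormedAlgebra 𝕜 𝔸] {f g : 𝕜 → 𝔸}
    (hf : ContDiffAt 𝕜 k f x) (hg : ContDiffAt 𝕜 k g x) :
    (taylorSeries (f * g) x).coeff k = (taylorSeries f x * taylorSeries g x).coeff k := by
  simp only [taylorSeries, PowerSeries.coeff_mk, PowerSeries.coeff_mul, iteratedDeriv_mul hf hg,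
    smul_sum, Nat.sum_antidiagonal_eq_sum_range_succ_mk]
  refine sum_congr rfl fun i hi => ?_
  have choose_eq := Nat.cast_choose 𝕜 (mem_range_succ_iff.mp hi)
  have factorial_ne_zero : (k.factorial : 𝕜) ≠ 0 := Nat.cast_ne_zero.mpr k.factorial_ne_zero
  rw [smul_mul_smul_comm, mul_assoc, ← nsmul_eq_mul, ← Nat.cast_smul_eq_nsmul 𝕜, smul_smul,
    choose_eq]
  congr 1
  field_simp

lemma coeff_taylorSeries_pow {𝔸 : Type*} [NormedCommRing 𝔸] [NormedAlgebra 𝕜 𝔸] {f : 𝕜 → 𝔸}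
    (hf : ContDiffAt 𝕜 k f x) (m : ℕ) :
    (taylorSeries (f ^ m) x).coeff k = (taylorSeries f x ^ m).coeff k := by
  induction m generalizing k with
  | zero => rw [pow_zero, pow_zero, taylorSeries_one]
  | succ m ih =>
    rw [pow_succ, pow_succ, coeff_taylorSeries_mul (f := f ^ m) (hf.pow m) hf,
      PowerSeries.coeff_mul, PowerSeries.coeff_mul]
    refine sum_congr rfl fun i hi => ?_
    rw [ih (hf.of_le (mod_cast HasAntidiagonal.antidiagonal.fst_le hi))]

end TaylorSeries

theorem faa_di_bruno_pow_general {𝕜 𝔸 : Type*} [NontriviallyNormedField 𝕜] [CharZero 𝕜]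
    [NormedCommRing 𝔸] [NormedAlgebra 𝕜 𝔸] {n : ℕ} {g : 𝕜 → 𝔸} {y : 𝕜}
    (hg : ContDiffAt 𝕜 n g y) (m : ℕ) :
    (n.factorial : 𝕜)⁻¹ • iteratedDeriv n (fun x => g x ^ m) y =
      ∑ c ∈ tuplesOfWeight (fun j : Fin n => j.1 + 1) n,
        ((m.descFactorial (∑ j, c j) : 𝕜) / ∏ j, ((c j).factorial : 𝕜)) •
          (g y ^ (m - ∑ j, c j) *
            ∏ j : Fin n, (((j.1 + 1).factorial : 𝕜)⁻¹ • iteratedDeriv (j.1 + 1) g y) ^ c j) := by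
  have coeff_eq := (coeff_taylorSeries_pow hg m).trans (coeff_pow_eq_sum_tuplesOfWeight _ m n)
  simp only [← cast_choose_mul_multinomial, Nat.cast_smul_eq_nsmul, nsmul_eq_mul]
  simpa [taylorSeries, Pi.pow_def] using coeff_eq

/-- **Faà di Bruno's formula for powers** (the Lagrange-series case):
`(1/n!) Dⁿ (g y)^m` equals the sum over tuples `(m₁, …, mₙ)` with
`∑ j·m_j = n` of `m(m-1)⋯(m-p+1)/(m₁!⋯mₙ!) · (g y)^{m-p} · ∏ (g^{(j)}(y)/j!)^{m_j}`,
where `p = ∑ m_j` and the descending factorial is `Nat.descFactorial`. -/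
theorem faa_di_bruno_pow (n : ℕ) (g : ℝ → ℝ) (hg : ContDiff ℝ n g)
    (m : ℕ) (y : ℝ) :
    (1 / (n.factorial : ℝ)) * iteratedDeriv n (fun x => (g x) ^ m) y =
      ∑ c ∈ (Fintype.piFinset fun _ : Fin n => Finset.range (n + 1)).filter
          (fun c : Fin n → ℕ => ∑ j : Fin n, (j.1 + 1) * c j = n),
        (m.descFactorial (∑ j : Fin n, c j) : ℝ) /
            (∏ j : Fin n, ((c j).factorial : ℝ)) *
          (g y) ^ (m - ∑ j : Fin n, c j) *
          ∏ j : Fin n,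
            (iteratedDeriv (j.1 + 1) g y / ((j.1 + 1).factorial : ℝ)) ^ c j := by
  simpa only [tuplesOfWeight, smul_eq_mul, one_div, mul_assoc, ← div_eq_inv_mul]
    using faa_di_bruno_pow_general hg.contDiffAt m
end

section
/- Determinant form of Faà di Bruno's formula, general order: Let n ∈ ℕ, let f, g : ℝ → ℝ be (n+1)-times continuously differentiable, and let y ∈ ℝ. Define the (n+1)×(n+1) matrix M over the polynomial ring ℝ[T], with rows and columns indexed by 0, …, n, as follows: for each row r, the entry in column 0 is g^{(n+1−r)}(y)·T; for r ≥ 1 the entry in column r is the constant polynomial −1; the entries in columns c with 1 ≤ c < r are 0; and for every column c > r (c ≥ 1) the entry is C(n−r, c−r−1) · g^{(c−r)}(y) · T, where C denotes the binomial coefficient. Then evaluating the determinant of M by linearly replacing each monomial T^p with f^{(p)}(g(y)) — i.e., forming ∑_p (det M).coeff(p) · f^{(p)}(g(y)) — yields (−1)^n · (f ∘ g)^{(n+1)}(y). -/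
open Polynomial

/-!
The polynomials `B₀ = 1`, `Bₘ₊₁ = ∑ₖ C(m, k) · g⁽ᵏ⁺¹⁾(y) · T · Bₘ₋ₖ` become `(f ∘ g)⁽ᵐ⁾(y)` under
`Tᵖ ↦ f⁽ᵖ⁾(g y)`: this is the Leibniz rule applied to `(f ∘ g)′ = g′ · (f′ ∘ g)`, the factor `T`
accounting for the replacement of `f` by `f′`. Column `0` of the matrix is what the pattern of the
other columns would give for column `n + 1`, so the recurrence says that the matrix sends the vector
`(1, Bₙ, …, B₁)` to `(Bₙ₊₁, 0, …, 0)`. By Cramer's rule its determinant is that of the upper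
triangular matrix with diagonal `Bₙ₊₁, -1, …, -1`.
-/

section Determinant

open Finset Matrix

theorem apply_mul_det_of_mulVec_eq_single {m A : Type*} [Fintype m] [LinearOrder m] [CommRing A]
    {M : Matrix m m A} {x : m → A} {j : m} {d : A}
    (hM : ∀ r c, c < r → c ≠ j → M r c = 0) (hx : M *ᵥ x = Pi.single j d) :
    x j * M.det = d * ∏ i ∈ univ.erase j, M i i := by
  have det_updateCol : (M.updateCol j (Pi.single j d)).det = x j * M.det := by
    rw [← smul_eq_mul, ← det_updateCol_sum, ← hx]
    simp only [mulVec_eq_sum, Finset.sum_fn, Pi.smul_def, op_smul_eq_smul, transpose_apply]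
  have upperTriangular : (M.updateCol j (Pi.single j d)).IsUpperTriangular := by
    intro r c (hcr : c < r)
    obtain rfl | hcj := eq_or_ne c j
    · rw [updateCol_self, Pi.single_eq_of_ne hcr.ne']
    · rw [updateCol_ne hcj, hM r c hcr hcj]
  rw [← det_updateCol, det_of_isUpperTriangular upperTriangular,
    ← mul_prod_erase univ _ (mem_univ j), updateCol_self, Pi.single_eq_same]
  congr 1
  exact prod_congr rfl fun i hi => updateCol_ne (ne_of_mem_erase hi)

end Determinant

section BellPolynomial

variable {R : Type*} [Semiring R]

/-- The complete Bell polynomial `Bₘ(a₁ T, a₂ T, …, aₘ T)` as a polynomial in `T`, defined by its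
binomial recurrence; `a 0` does not occur in it. For commutative `R`, the coefficient of `Tᵖ` is the
partial Bell polynomial `Bₘ,ₚ(a₁, a₂, …)`. -/
noncomputable def bellPolynomial (a : ℕ → R) : ℕ → R[X]
  | 0 => 1
  | m + 1 => ∑ k : Fin (m + 1), C (m.choose k * a (k + 1)) * X * bellPolynomial a (m - k)

@[simp]
theorem bellPolynomial_zero (a : ℕ → R) : bellPolynomial a 0 = 1 := by
  rw [bellPolynomial]

theorem bellPolynomial_succ (a : ℕ → R) (m : ℕ) :
    bellPolynomial a (m + 1) =
      ∑ k ∈ Finset.range (m + 1), C (m.choose k * a (k + 1)) * X * bellPolynomial a (m - k) := by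
  rw [bellPolynomial, Finset.sum_range]

theorem bellPolynomial_succ_sub (a : ℕ → R) {r n : ℕ} (hr : r ≤ n) :
    bellPolynomial a (n + 1 - r) = C (a (n + 1 - r)) * X +
      ∑ c ∈ Finset.Ico r n,
        C ((n - r).choose (c - r) * a (c + 1 - r)) * X * bellPolynomial a (n - c) := by
  obtain ⟨d, rfl⟩ := Nat.exists_eq_add_of_le hr
  rw [Finset.sum_Ico_eq_sum_range, add_assoc, Nat.add_sub_cancel_left, Nat.add_sub_cancel_left,
    bellPolynomial_succ, Finset.sum_range_succ, add_comm]
  simp [add_assoc, Nat.add_sub_add_left]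

end BellPolynomial

section UmbralEval

variable {R M : Type*} [Semiring R] [AddCommMonoid M] [Module R M]

/-- The umbral substitution `Tᵖ ↦ b p`, extended linearly to all polynomials. -/
noncomputable def umbralEval (b : ℕ → M) : R[X] →ₗ[R] M :=
  lsum fun p => LinearMap.toSpanSingleton R M (b p)

theorem umbralEval_apply (b : ℕ → M) (q : R[X]) : umbralEval b q = q.sum fun p c => c • b p :=
  rfl

theorem umbralEval_monomial (b : ℕ → M) (p : ℕ) (c : R) :
    umbralEval b (monomial p c) = c • b p :=
  sum_monomial_index c (fun p c => c • b p) (zero_smul R (b p))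

theorem umbralEval_one (b : ℕ → M) : umbralEval b (1 : R[X]) = b 0 := by
  rw [← monomial_zero_one, umbralEval_monomial, one_smul]

theorem umbralEval_X_mul (b : ℕ → M) (q : R[X]) :
    umbralEval b (X * q) = umbralEval (fun p => b (p + 1)) q := by
  induction q using Polynomial.induction_on' with
  | add p q hp hq => rw [mul_add, map_add, map_add, hp, hq]
  | monomial p c => rw [X_mul_monomial, umbralEval_monomial, umbralEval_monomial]

end UmbralEval

section FaaDiBrunoMatrix

open Matrix

variable {R : Type*} [CommRing R]

/-- The matrix of the determinant form of Faà di Bruno's formula, where `a k` stands for the `k`-th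
derivative of the inner function. -/
noncomputable def faaDiBrunoMatrix (a : ℕ → R) (n : ℕ) : Matrix (Fin (n + 1)) (Fin (n + 1)) R[X] :=
  Matrix.of fun r c =>
    if c.1 = 0 then C (a (n + 1 - r.1)) * X
    else if c.1 = r.1 then -1
    else if c.1 < r.1 then 0
    else C (((n - r.1).choose (c.1 - r.1 - 1) : R) * a (c.1 - r.1)) * X

theorem faaDiBrunoMatrix_apply_zero (a : ℕ → R) {n : ℕ} (r : Fin (n + 1)) :
    faaDiBrunoMatrix a n r 0 = C (a (n + 1 - r)) * X := by
  simp [faaDiBrunoMatrix]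

theorem faaDiBrunoMatrix_apply_self (a : ℕ → R) {n : ℕ} {r : Fin (n + 1)} (hr : r ≠ 0) :
    faaDiBrunoMatrix a n r r = -1 := by
  simp [faaDiBrunoMatrix, hr]

theorem faaDiBrunoMatrix_apply_of_lt (a : ℕ → R) {n : ℕ} {r c : Fin (n + 1)} (hcr : c < r)
    (hc : c ≠ 0) : faaDiBrunoMatrix a n r c = 0 := by
  simp [faaDiBrunoMatrix, hc, hcr, hcr.ne, Fin.val_inj]

theorem faaDiBrunoMatrix_apply_succ (a : ℕ → R) {n : ℕ} (r : Fin (n + 1)) (c : Fin n) :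
    faaDiBrunoMatrix a n r c.succ =
      (if r.1 ≤ c then C (((n - r).choose (c - r) : R) * a (c + 1 - r)) * X else 0) -
        if r = c.succ then 1 else 0 := by
  obtain hrc | rfl | hcr := lt_trichotomy r c.succ
  · have hrc' : r.1 ≤ c := Nat.lt_succ_iff.mp hrc
    have index_eq : c.1 + 1 - r - 1 = c - r := by omega
    have off_diagonal : c.1 + 1 ≠ r := by omega
    simp [faaDiBrunoMatrix, hrc', hrc.ne, hrc.not_gt, index_eq, off_diagonal]
  · simp [faaDiBrunoMatrix_apply_self]
  · have hcr' : c.1 < r := (Nat.lt_succ_self _).trans hcr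
    simp [faaDiBrunoMatrix_apply_of_lt a hcr, hcr', hcr.ne']

theorem faaDiBrunoMatrix_mulVec_vecCons_apply (a : ℕ → R) {n : ℕ} (r : Fin (n + 1)) :
    (faaDiBrunoMatrix a n *ᵥ vecCons 1 fun c : Fin n => bellPolynomial a (n - c)) r =
      bellPolynomial a (n + 1 - r) -
        ∑ c : Fin n, if r = c.succ then bellPolynomial a (n - c) else 0 := by
  have filter_eq_Ico : {c ∈ Finset.range n | r.1 ≤ c} = Finset.Ico r.1 n := by
    ext; simp [and_comm]
  rw [bellPolynomial_succ_sub a r.is_le, ← filter_eq_Ico, Finset.sum_filter,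
    Finset.sum_range, add_sub_assoc, ← Finset.sum_sub_distrib]
  simp [mulVec, dotProduct, Fin.sum_univ_succ, faaDiBrunoMatrix_apply_zero,
    faaDiBrunoMatrix_apply_succ, sub_mul]

theorem faaDiBrunoMatrix_mulVec_bellPolynomial (a : ℕ → R) (n : ℕ) :
    faaDiBrunoMatrix a n *ᵥ (vecCons 1 fun c : Fin n => bellPolynomial a (n - c)) =
      (Pi.single 0 (bellPolynomial a (n + 1)) : Fin (n + 1) → R[X]) := by
  ext1 r
  rw [faaDiBrunoMatrix_mulVec_vecCons_apply]
  cases r using Fin.cases with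
  | zero => simp [(Fin.succ_ne_zero _).symm]
  | succ s => simp

theorem det_faaDiBrunoMatrix (a : ℕ → R) (n : ℕ) :
    (faaDiBrunoMatrix a n).det = (-1) ^ n * bellPolynomial a (n + 1) := by
  have diagonal_prod : ∏ i ∈ Finset.univ.erase 0, faaDiBrunoMatrix a n i i = (-1) ^ n := by
    rw [Finset.prod_congr rfl fun i hi => faaDiBrunoMatrix_apply_self a (Finset.ne_of_mem_erase hi)]
    simp
  have cramer := apply_mul_det_of_mulVec_eq_single
    (fun _ _ => faaDiBrunoMatrix_apply_of_lt a) (faaDiBrunoMatrix_mulVec_bellPolynomial a n)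
  rwa [cons_val_zero, one_mul, diagonal_prod, mul_comm] at cramer

end FaaDiBrunoMatrix

section Composition

variable {𝕜 𝕜' F : Type*} [NontriviallyNormedField 𝕜] [NontriviallyNormedField 𝕜']
  [NormedAlgebra 𝕜 𝕜'] [NormedAddCommGroup F] [NormedSpace 𝕜 F] [NormedSpace 𝕜' F]
  [IsScalarTower 𝕜 𝕜' F] {f : 𝕜' → F} {g : 𝕜 → 𝕜'} {y : 𝕜} {m n : ℕ}

theorem iteratedDeriv_succ_comp (hf : ContDiffAt 𝕜' (m + 1) f (g y))
    (hg : ContDiffAt 𝕜 (m + 1) g y) :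
    iteratedDeriv (m + 1) (f ∘ g) y = ∑ k ∈ Finset.range (m + 1),
      m.choose k • iteratedDeriv (k + 1) g y • iteratedDeriv (m - k) (deriv f ∘ g) y := by
  have chain_rule : deriv (f ∘ g) =ᶠ[nhds y] deriv g • (deriv f ∘ g) := by
    filter_upwards [hg.continuousAt.eventually (hf.eventually (by simp)), hg.eventually (by simp)]
      with x hfx hgx
    exact deriv.scomp x (hfx.differentiableAt (by simp)) (hgx.differentiableAt (by simp))
  have hg' : ContDiffAt 𝕜 m (deriv g) y := hg.derivWithin le_rfl
  have hf'g : ContDiffAt 𝕜 m (deriv f ∘ g) y :=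
    ((hf.derivWithin le_rfl).restrict_scalars 𝕜).comp y (hg.of_le le_self_add)
  rw [iteratedDeriv_succ', chain_rule.iteratedDeriv_eq m]
  simpa only [iteratedDerivWithin_univ, ← iteratedDeriv_succ'] using
    iteratedDerivWithin_smul (Set.mem_univ y) uniqueDiffOn_univ hg'.contDiffWithinAt
      hf'g.contDiffWithinAt

theorem umbralEval_bellPolynomial_eq_iteratedDeriv_comp (hf : ContDiffAt 𝕜' m f (g y))
    (hg : ContDiffAt 𝕜 m g y) :
    umbralEval (fun p => iteratedDeriv p f (g y))
        (bellPolynomial (fun k => iteratedDeriv k g y) m) =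
      iteratedDeriv m (f ∘ g) y := by
  induction m using Nat.strong_induction_on generalizing f with
  | _ m ih =>
  cases m with
  | zero => simp [umbralEval_one]
  | succ m =>
    rw [iteratedDeriv_succ_comp hf hg, bellPolynomial_succ, map_sum]
    refine Finset.sum_congr rfl fun k _ => ?_
    have hk : ((m - k : ℕ) : WithTop ℕ∞) + 1 ≤ (m + 1 : ℕ) := by
      exact_mod_cast Nat.succ_le_succ (Nat.sub_le m k)
    rw [mul_assoc, ← smul_eq_C_mul, map_smul, umbralEval_X_mul, mul_smul, Nat.cast_smul_eq_nsmul,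
      ← ih (m - k) (by omega) (hf.derivWithin hk) (hg.of_le (le_self_add.trans hk))]
    simp only [iteratedDeriv_succ']

theorem faa_di_bruno_det_general (hf : ContDiffAt 𝕜' (n + 1) f (g y))
    (hg : ContDiffAt 𝕜 (n + 1) g y) :
    (faaDiBrunoMatrix (fun k => iteratedDeriv k g y) n).det.sum
        (fun p coeff => coeff • iteratedDeriv p f (g y)) =
      (-1 : 𝕜') ^ n • iteratedDeriv (n + 1) (f ∘ g) y := by
  rw [det_faaDiBrunoMatrix, ← umbralEval_apply, ← C_1, ← C_neg, ← C_pow, ← smul_eq_C_mul, map_smul,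
    umbralEval_bellPolynomial_eq_iteratedDeriv_comp (mod_cast hf) (mod_cast hg)]

end Composition

/-- **Determinant form of Faà di Bruno's formula, general order.** For
`(n+1)`-times continuously differentiable `f g : ℝ → ℝ`, consider the
`(n+1)×(n+1)` matrix over `ℝ[T]` whose row `r` has entry `g^{(n+1-r)}(y)·T`
in column `0`, `-1` in column `r` (for `r ≥ 1`), `0` in columns `1 ≤ c < r`,
and `C(n-r, c-r-1)·g^{(c-r)}(y)·T` in columns `c > r`, `c ≥ 1`. Evaluating its
determinant by replacing `T^p` with `f^{(p)}(g y)` yields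
`(-1)^n · (f ∘ g)^{(n+1)}(y)`. -/
theorem faa_di_bruno_det (n : ℕ) (f g : ℝ → ℝ)
    (hf : ContDiff ℝ (n + 1) f) (hg : ContDiff ℝ (n + 1) g) (y : ℝ) :
    (Matrix.det (Matrix.of fun r c : Fin (n + 1) =>
        if c.1 = 0 then C (iteratedDeriv (n + 1 - r.1) g y) * X
        else if c.1 = r.1 then -1
        else if c.1 < r.1 then 0
        else C ((Nat.choose (n - r.1) (c.1 - r.1 - 1) : ℝ) *
            iteratedDeriv (c.1 - r.1) g y) * X)).sum
        (fun p coeff => coeff * iteratedDeriv p f (g y)) =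
      (-1 : ℝ) ^ n * iteratedDeriv (n + 1) (f ∘ g) y := by
  exact faa_di_bruno_det_general hf.contDiffAt hg.contDiffAt
end
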